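/- arXiv:2010.08857 — 2 statements merged into one kernel-verified Lean document; each statement's English description precedes it below -/
import Mathlib

section
/- Let F be a field, K a field that is an F-algebra (via a ring homomorphism t : F → K), M a vector space over F, and r a natural number. Then there is a K-linear equivalence from (⋀^r_F M) ⊗_F K to ⋀^r_K (M ⊗_F K) which sends (x_1 ∧ … ∧ x_r) ⊗ 1 to (x_1 ⊗ 1) ∧ … ∧ (x_r ⊗ 1) for all x_1, …, x_r ∈ M. -/
open scoped TensorProduct

/-!
The map `x ↦ (1 ⊗ x₁) ∧ ⋯ ∧ (1 ⊗ x_r)` is `F`-multilinear and alternating in `x`, so it factors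
through `⋀[F]^r M` and extends `K`-linearly to `K ⊗[F] ⋀[F]^r M` (`exteriorPowerBaseChangeMap`).
Choose a basis `b` of `M`, indexed by a linearly ordered set. The elements `1 ⊗ b_s`, where `b_s`
is the increasing wedge of basis vectors over an `r`-subset `s`, form a `K`-basis of the source, and
they are sent to the corresponding wedges of the basis `1 ⊗ b` of `K ⊗[F] M`, which form a `K`-basis
of the target. Hence the map is bijective.
-/

/-- The `F`-multilinear alternating map `x ↦ (1 ⊗ x₁) ∧ ⋯ ∧ (1 ⊗ x_r)`. -/
noncomputable def wedgeOneTmul (F K M : Type*) [Field F] [Field K] [Algebra F K]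
    [AddCommGroup M] [Module F M] (r : ℕ) : M [⋀^Fin r]→ₗ[F] (⋀[K]^r (K ⊗[F] M)) where
  toFun x := exteriorPower.ιMulti K r fun i => (1 : K) ⊗ₜ[F] x i
  map_update_add' x i a b := by
    have h (c : M) : (fun j => (1 : K) ⊗ₜ[F] Function.update x i c j) =
        Function.update (fun j => (1 : K) ⊗ₜ[F] x j) i (1 ⊗ₜ[F] c) :=
      funext fun j => Function.apply_update (fun _ y => (1 : K) ⊗ₜ[F] y) x i c j
    simp only [h, TensorProduct.tmul_add, AlternatingMap.map_update_add]
  map_update_smul' x i c a := by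
    have h (c : M) : (fun j => (1 : K) ⊗ₜ[F] Function.update x i c j) =
        Function.update (fun j => (1 : K) ⊗ₜ[F] x j) i (1 ⊗ₜ[F] c) :=
      funext fun j => Function.apply_update (fun _ y => (1 : K) ⊗ₜ[F] y) x i c j
    simp only [h, TensorProduct.tmul_smul]
    rw [← algebraMap_smul K c, AlternatingMap.map_update_smul, algebraMap_smul]
  map_eq_zero_of_eq' x i j hx hij :=
    (exteriorPower.ιMulti K r).map_eq_zero_of_eq _ (by simp only [hx]) hij

/-- The `K`-linear map sending `k ⊗ (x₁ ∧ ⋯ ∧ x_r)` to `k • ((1 ⊗ x₁) ∧ ⋯ ∧ (1 ⊗ x_r))`. -/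
noncomputable def exteriorPowerBaseChangeMap (F K M : Type*) [Field F] [Field K] [Algebra F K]
    [AddCommGroup M] [Module F M] (r : ℕ) :
    K ⊗[F] (⋀[F]^r M) →ₗ[K] (⋀[K]^r (K ⊗[F] M)) :=
  (exteriorPower.alternatingMapLinearEquiv (wedgeOneTmul F K M r)).liftBaseChange K

lemma exteriorPowerBaseChangeMap_one_tmul (F K M : Type*) [Field F] [Field K] [Algebra F K]
    [AddCommGroup M] [Module F M] (r : ℕ) (x : Fin r → M) :
    exteriorPowerBaseChangeMap F K M r (1 ⊗ₜ[F] exteriorPower.ιMulti F r x) =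
      exteriorPower.ιMulti K r fun i => (1 : K) ⊗ₜ[F] x i := by
  rw [exteriorPowerBaseChangeMap, LinearMap.liftBaseChange_tmul, one_smul,
    exteriorPower.alternatingMapLinearEquiv_apply_ιMulti]
  rfl

lemma exteriorPowerBaseChangeMap_bijective (F K M : Type*) [Field F] [Field K] [Algebra F K]
    [AddCommGroup M] [Module F M] (r : ℕ) :
    Function.Bijective (exteriorPowerBaseChangeMap F K M r) := by
  let b := Module.Basis.ofVectorSpace F M
  -- Ordering the index set makes the increasing wedges of basis vectors available as a basis.
  let : LinearOrder (Module.Basis.ofVectorSpaceIndex F M) :=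
    open Classical in linearOrderOfSTO WellOrderingRel
  let B := (b.exteriorPower r).baseChange K
  let C := (b.baseChange K).exteriorPower r
  have h : exteriorPowerBaseChangeMap F K M r = (B.equiv C (Equiv.refl _)).toLinearMap := by
    refine B.ext fun s => ?_
    rw [LinearEquiv.coe_coe, Module.Basis.equiv_apply, Equiv.refl_apply]
    simp only [B, C, Module.Basis.baseChange_apply, exteriorPower.basis_apply]
    refine (exteriorPowerBaseChangeMap_one_tmul F K M r _).trans ?_
    simp only [exteriorPower.ιMulti_family, Function.comp_def, Module.Basis.baseChange_apply]
  rw [h]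
  exact (B.equiv C (Equiv.refl _)).bijective

/-- Base change of exterior powers: for a field extension `K` of `F`, an `F`-vector
space `M` and `r : ℕ`, there is a `K`-linear equivalence
`K ⊗[F] (⋀[F]^r M) ≃ ⋀[K]^r (K ⊗[F] M)` sending `1 ⊗ (x₁ ∧ ⋯ ∧ x_r)` to
`(1 ⊗ x₁) ∧ ⋯ ∧ (1 ⊗ x_r)` for all `x₁, …, x_r ∈ M`. -/
theorem exteriorPower_baseChange (F K M : Type*) [Field F] [Field K] [Algebra F K]
    [AddCommGroup M] [Module F M] (r : ℕ) :
    ∃ e : K ⊗[F] (⋀[F]^r M) ≃ₗ[K] (⋀[K]^r (K ⊗[F] M)),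
      ∀ x : Fin r → M,
        e ((1 : K) ⊗ₜ[F]
            (⟨ExteriorAlgebra.ιMulti F r x,
              ExteriorAlgebra.ιMulti_range F r (Set.mem_range_self x)⟩ : ⋀[F]^r M)) =
          (⟨ExteriorAlgebra.ιMulti K r (fun i => (1 : K) ⊗ₜ[F] x i),
            ExteriorAlgebra.ιMulti_range K r (Set.mem_range_self _)⟩ :
            ⋀[K]^r (K ⊗[F] M)) :=
  ⟨LinearEquiv.ofBijective _ (exteriorPowerBaseChangeMap_bijective F K M r),
    exteriorPowerBaseChangeMap_one_tmul F K M r⟩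
end

section
/- Let E be a field that is a finite extension of ℚ, let σ be a ℚ-algebra involution of E, and let V be a finite-dimensional E-vector space. Suppose ψ : V × V → ℚ is a ℚ-bilinear form satisfying ψ(a x, y) = ψ(x, σ(a) y) for all a ∈ E and x, y ∈ V. Then there exists a unique map φ : V × V → E which is E-linear in the first variable and σ-semilinear in the second variable (i.e., additive with φ(x, a y) = σ(a) φ(x, y)) such that ψ(x, y) = Tr_{E/ℚ}(φ(x, y)) for all x, y ∈ V. -/
/-!
The trace form `(c, e) ↦ Tr (c * e)` of the separable extension `E/ℚ` is nondegenerate, so every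
`ℚ`-linear functional on `E` is `e ↦ Tr (c * e)` for exactly one `c ∈ E`. The value `φ x y` is the
element `c` representing the functional `e ↦ ψ (e • x) y`. This choice is forced by `E`-linearity
in the first variable, and the (semi)linearity of `φ` follows by comparing the functionals
represented by both sides.
-/

theorem eq_of_trace_mul_eq {E : Type*} [Field E] [Algebra ℚ E] [FiniteDimensional ℚ E] {c d : E}
    (h : ∀ e, Algebra.trace ℚ E (c * e) = Algebra.trace ℚ E (d * e)) : c = d :=
  ((Algebra.traceForm ℚ E).toDual (traceForm_nondegenerate ℚ E)).injective (LinearMap.ext h)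

theorem exists_trace_mul_eq {E : Type*} [Field E] [Algebra ℚ E] [FiniteDimensional ℚ E]
    (f : E →ₗ[ℚ] ℚ) : ∃ c : E, ∀ e, Algebra.trace ℚ E (c * e) = f e := by
  obtain ⟨c, hc⟩ :=
    ((Algebra.traceForm ℚ E).toDual (traceForm_nondegenerate ℚ E)).surjective f
  exact ⟨c, fun e => LinearMap.congr_fun hc e⟩

/-- Let `E` be a finite extension of `ℚ`, `σ` a `ℚ`-algebra involution of `E`, and `V` a
finite-dimensional `E`-vector space.  If `ψ : V × V → ℚ` is a `ℚ`-bilinear form with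
`ψ (a • x) y = ψ x (σ a • y)` for all `a ∈ E`, then there is a unique `φ : V × V → E`,
`E`-linear in the first variable and `σ`-semilinear in the second, such that
`ψ x y = Tr_{E/ℚ} (φ x y)` for all `x, y`. -/
theorem exists_unique_sesquilinear_lift (E V : Type*) [Field E] [Algebra ℚ E]
    [FiniteDimensional ℚ E] (σ : E →ₐ[ℚ] E) (hσ : ∀ a, σ (σ a) = a)
    [AddCommGroup V] [Module E V] [Module ℚ V] [IsScalarTower ℚ E V]
    [FiniteDimensional E V]
    (ψ : V →ₗ[ℚ] V →ₗ[ℚ] ℚ)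
    (hψ : ∀ (a : E) (x y : V), ψ (a • x) y = ψ x (σ a • y)) :
    ∃! φ : V →ₗ[E] (V →ₛₗ[(σ : E →+* E)] E),
      ∀ x y, ψ x y = Algebra.trace ℚ E (φ x y) := by
  have key (x y : V) : ∃ c : E, ∀ e, Algebra.trace ℚ E (c * e) = ψ (e • x) y :=
    exists_trace_mul_eq
      ((ψ.flip y).comp ((LinearMap.toSpanSingleton E V x).restrictScalars ℚ))
  choose f hf using key
  refine ⟨LinearMap.mk₂'ₛₗ (RingHom.id E) (σ : E →+* E) f ?_ ?_ ?_ ?_, ?_, ?_⟩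
  · intro x x' y
    refine eq_of_trace_mul_eq fun e => ?_
    rw [add_mul, map_add, hf, hf, hf, smul_add, map_add, LinearMap.add_apply]
  · intro a x y
    refine eq_of_trace_mul_eq fun e => ?_
    rw [RingHom.id_apply, smul_eq_mul, mul_comm a, mul_assoc, hf, hf, smul_smul, mul_comm]
  · intro x y y'
    refine eq_of_trace_mul_eq fun e => ?_
    rw [add_mul, map_add, hf, hf, hf, map_add]
  · intro a x y
    refine eq_of_trace_mul_eq fun e => ?_
    -- Since `σ (σ a) = a`, the scalar `a` moves to the first variable of `ψ` as `σ a`.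
    have h := hψ (σ a) (e • x) y
    rw [hσ, smul_smul] at h
    rw [hf, ← h, smul_eq_mul, mul_comm _ (f x y), mul_assoc, hf]
    rfl
  · intro x y
    have h := hf x y 1
    rw [mul_one, one_smul] at h
    exact h.symm
  · intro φ hφ
    ext x y
    refine eq_of_trace_mul_eq fun e => ?_
    rw [LinearMap.mk₂'ₛₗ_apply, hf, hφ, map_smul, LinearMap.smul_apply, smul_eq_mul, mul_comm]
end
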